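/- arXiv:1503.08845 — 3 statements merged into one kernel-verified Lean document; each statement's English description precedes it below -/
import Mathlib

section
/- Let S ∈ ℝ^{3×3} be skew-symmetric, let T ∈ ℝ^{3×3} be arbitrary, and set K = T + Tᵀ − S². Then there exist ε > 0 and C > 0 such that for all real t with |t| < ε, the matrix (Id₃ + tS + t²T)ᵀ(Id₃ + tS + t²T) is symmetric positive definite, and its unique symmetric positive definite square root satisfies ‖((Id₃ + tS + t²T)ᵀ(Id₃ + tS + t²T))^{1/2} − Id₃ − (t²/2) K‖ ≤ C |t|³. -/
noncomputable section

open scoped Topology ENNReal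
open Filter MeasureTheory

/-- Points of the midplate `Ω ⊆ ℝ²`. -/
abbrev E2 : Type := Fin 2 → ℝ
/-- Vectors in `ℝ³`. -/
abbrev V3 : Type := Fin 3 → ℝ
/-- `3×3` real arrays. -/
abbrev M3 : Type := Fin 3 → Fin 3 → ℝ
/-- `2×2` real arrays. -/
abbrev M2 : Type := Fin 2 → Fin 2 → ℝ

/-- Partial derivative `∂ᵢ` of a scalar field on `ℝ²`. -/
def pd2 (i : Fin 2) (f : E2 → ℝ) (x : E2) : ℝ := fderiv ℝ f x (Pi.single i 1)

/-- Partial derivative `∂ᵢ` of an `ℝ³`-valued field on `ℝ²`. -/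
def pdv (i : Fin 2) (f : E2 → V3) (x : E2) : V3 := fderiv ℝ f x (Pi.single i 1)

/-- Euclidean inner product on `ℝ³`. -/
def dot3 (u v : V3) : ℝ := ∑ k, u k * v k

/-- Matrix product of `3×3` arrays. -/
def mmul (A B : M3) : M3 := fun i j => ∑ k, A i k * B k j

/-- Transpose of a `3×3` array. -/
def transp (A : M3) : M3 := fun i j => A j i

/-- The identity `3×3` array. -/
def idm : M3 := fun i j => if i = j then 1 else 0

/-- Frobenius norm of a `3×3` array. -/
def fnorm (A : M3) : ℝ := Real.sqrt (∑ i, ∑ j, (A i j) ^ 2)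

/-- Symmetry of a `3×3` array. -/
def SymM (A : M3) : Prop := ∀ i j, A i j = A j i

/-- Positive definiteness of a `3×3` array. -/
def PosDefM (A : M3) : Prop := ∀ v : V3, v ≠ 0 → 0 < ∑ i, ∑ j, v i * A i j * v j

/-- The special orthogonal group `SO(3)`. -/
def SO3 : Set M3 := {R | mmul (transp R) R = idm ∧ (Matrix.of R).det = 1}

/-- Entries of the inverse of a `3×3` array. -/
def minv (A : M3) : M3 := fun i j => (Matrix.of A)⁻¹ i j

/-- The columns `∂₁y₀, ∂₂y₀, b₀` of the matrix `Q₀`. -/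
def Qcol (y0 b0 : E2 → V3) (x : E2) : Fin 3 → V3 := ![pdv 0 y0 x, pdv 1 y0 x, b0 x]

/-- The determinant of `Q₀`. -/
def Qdet (y0 b0 : E2 → V3) (x : E2) : ℝ := (Matrix.of fun a j => Qcol y0 b0 x j a).det

/-- Partial derivatives `∂₁, ∂₂, ∂₃` of an `x₃`-independent scalar field (so `∂₃ = 0`). -/
def pd3 (k : Fin 3) (f : E2 → ℝ) (x : E2) : ℝ :=
  if h : (k : ℕ) < 2 then pd2 ⟨(k : ℕ), h⟩ f x else 0

/-- Christoffel symbols `Γ^n_{kl}` of the (`x₃`-independent) metric `G`. -/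
def Gamma (G : E2 → M3) (n k l : Fin 3) (x : E2) : ℝ :=
  (1 / 2) * ∑ s, minv (G x) n s *
    (pd3 k (fun y => G y s l) x + pd3 l (fun y => G y s k) x - pd3 s (fun y => G y k l) x)

/-- Covariant Riemann curvatures `R_{iklm}` of the (`x₃`-independent) metric `G`;
indices are `0`-based, so e.g. `R_{1313} = Riem G 0 2 0 2`. -/
def Riem (G : E2 → M3) (i k l m : Fin 3) (x : E2) : ℝ :=
  (1 / 2) * (pd3 k (fun y => pd3 l (fun z => G z i m) y) x
           + pd3 i (fun y => pd3 m (fun z => G z k l) y) x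
           - pd3 k (fun y => pd3 m (fun z => G z i l) y) x
           - pd3 i (fun y => pd3 l (fun z => G z k m) y) x)
    + ∑ n, ∑ p, G x n p *
        (Gamma G n k l x * Gamma G p i m x - Gamma G n k m x * Gamma G p i l x)

/-- The deformation gradient `∇u = [∂₁u | ∂₂u | ∂₃u]` of `u : Ω^h → ℝ³`. -/
def gradu (u : E2 × ℝ → V3) (x : E2 × ℝ) : M3 :=
  fun a j => ![fderiv ℝ u x (Pi.single 0 1, 0),
               fderiv ℝ u x (Pi.single 1 1, 0),
               fderiv ℝ u x (0, 1)] j a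

/-- The elastic energy `E^h(u) = (1/h) ∫_{Ω × (-h/2,h/2)} W(∇u A⁻¹)`. -/
def Eh (W : M3 → ℝ≥0∞) (A : E2 → M3) (Ω : Set E2) (h : ℝ) (u : E2 × ℝ → V3) : ℝ≥0∞ :=
  (ENNReal.ofReal h)⁻¹ *
    ∫⁻ x in Ω ×ˢ Set.Ioo (-(h / 2)) (h / 2), W (mmul (gradu u x) (minv (A x.1)))

/-- Symmetric part of a `3×3` array. -/
def symM (A : M3) : M3 := fun i j => (A i j + A j i) / 2
/-- Symmetric part of a `2×2` array. -/
def sym2M (A : M2) : M2 := fun i j => (A i j + A j i) / 2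
/-- `F₂*`: the `3×3` array with principal `2×2` minor `F₂` and all other entries `0`. -/
def put (F2 : M2) : M3 :=
  fun i j => if h : (i : ℕ) < 2 ∧ (j : ℕ) < 2 then F2 ⟨i, h.1⟩ ⟨j, h.2⟩ else 0
/-- The tensor product `c ⊗ e₃`. -/
def tene3 (c : V3) : M3 := fun i j => if j = 2 then c i else 0
/-- Cross product in `ℝ³`. -/
def cross (u v : V3) : V3 :=
  ![u 1 * v 2 - u 2 * v 1, u 2 * v 0 - u 0 * v 2, u 0 * v 1 - u 1 * v 0]
/-- The quadratic form `Q₃(F) = D²W(Id₃)(F,F)`, for a density `w`. -/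
def Q3d (w : M3 → ℝ) (F : M3) : ℝ := fderiv ℝ (fun P => fderiv ℝ w P F) idm F
/-- The reduced quadratic form `Q_{2,A}(x', F₂)`:
the infimum of `Q₃(A⁻¹ F̃ A⁻¹)` over all `F̃` whose principal `2×2` minor is `F₂`. -/
def QA (w : M3 → ℝ) (A : E2 → M3) (x : E2) (F2 : M2) : ℝ :=
  ⨅ Ft : {Ft : M3 // ∀ i j : Fin 2, Ft i.castSucc j.castSucc = F2 i j},
    Q3d w (mmul (minv (A x)) (mmul Ft.1 (minv (A x))))

open scoped Matrix Matrix.Norms.Frobenius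

section FrobeniusNorm

variable {m n : Type*} [Fintype m] [Fintype n]

theorem Matrix.frobenius_norm_sq (A : Matrix m n ℝ) : ‖A‖ ^ 2 = ∑ i, ∑ j, A i j ^ 2 := by
  rw [Matrix.frobenius_norm_def, ← Real.sqrt_eq_rpow, Real.sq_sqrt (by positivity)]
  simp

theorem Matrix.trace_transpose_mul_self_eq_norm_sq (A : Matrix m n ℝ) :
    (Aᵀ * A).trace = ‖A‖ ^ 2 := by
  rw [Matrix.frobenius_norm_sq, Finset.sum_comm]
  simp [Matrix.trace, Matrix.mul_apply, sq]

theorem Matrix.abs_trace_transpose_mul_le (A B : Matrix m n ℝ) :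
    |(Aᵀ * B).trace| ≤ ‖A‖ * ‖B‖ := by
  apply abs_le_of_sq_le_sq _ (by positivity)
  rw [mul_pow, Matrix.frobenius_norm_sq, Matrix.frobenius_norm_sq]
  have key := Finset.sum_mul_sq_le_sq_mul_sq (Finset.univ : Finset (m × n))
    (fun p => A p.1 p.2) (fun p => B p.1 p.2)
  simp only [Fintype.sum_prod_type] at key
  convert key using 2
  rw [Finset.sum_comm]
  simp [Matrix.trace, Matrix.mul_apply]

/-- Stability of the matrix square root near the identity. -/
theorem Matrix.PosSemidef.norm_sub_le_two_mul_norm_mul_self_sub [DecidableEq n]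
    {B P : Matrix n n ℝ} (hB : B.PosSemidef) (hP : ‖P‖ ≤ 1 / 2) :
    ‖B - (1 + P)‖ ≤ 2 * ‖B * B - (1 + P) * (1 + P)‖ := by
  set X := B - (1 + P) with hX
  set R := B * B - (1 + P) * (1 + P) with hR
  have factor : Xᵀ * R = Xᵀ * B * X + Xᵀ * X + Xᵀ * (X * P) := by
    rw [mul_assoc, ← mul_add, ← mul_add, hX, hR]
    congr 1
    noncomm_ring
  have hpos : 0 ≤ (Xᵀ * B * X).trace := by
    simpa using (hB.conjTranspose_mul_mul_same X).trace_nonneg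
  have hupper := (abs_le.mp (Matrix.abs_trace_transpose_mul_le X R)).2
  have hlower := (abs_le.mp (Matrix.abs_trace_transpose_mul_le X (X * P))).1
  have hXP : ‖X * P‖ ≤ ‖X‖ * (1 / 2) :=
    (norm_mul_le X P).trans (mul_le_mul_of_nonneg_left hP (norm_nonneg X))
  have hprod := mul_le_mul_of_nonneg_left hXP (norm_nonneg X)
  rw [factor, Matrix.trace_add, Matrix.trace_add,
    Matrix.trace_transpose_mul_self_eq_norm_sq] at hupper
  rcases (norm_nonneg X).eq_or_lt with h0 | h0
  · rw [← h0]
    positivity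
  · refine le_of_mul_le_mul_left ?_ h0
    linarith

end FrobeniusNorm

section SquareRoot

open scoped MatrixOrder

variable {n : Type*} [Fintype n] [DecidableEq n]

theorem Matrix.PosDef.exists_posDef_mul_self_eq {M : Matrix n n ℝ} (hM : M.PosDef) :
    ∃ B : Matrix n n ℝ, B.PosDef ∧ B * B = M :=
  ⟨CFC.sqrt M, Matrix.isStrictlyPositive_iff_posDef.mp (.sqrt M hM.isStrictlyPositive),
    CFC.sqrt_mul_sqrt_self M hM.posSemidef.nonneg⟩

theorem Matrix.PosSemidef.eq_of_mul_self_eq_mul_self {A B : Matrix n n ℝ} (hA : A.PosSemidef)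
    (hB : B.PosSemidef) (h : A * A = B * B) : A = B :=
  (CFC.sqrt_unique h hA.nonneg).symm.trans (CFC.sqrt_unique rfl hB.nonneg)

end SquareRoot

theorem mul_self_sub_mul_self_of_transpose_eq_neg {n : Type*} [Fintype n] [DecidableEq n]
    {S T : Matrix n n ℝ} (hS : Sᵀ = -S) (t : ℝ) :
    (1 + t • S + t ^ 2 • T)ᵀ * (1 + t • S + t ^ 2 • T) -
        (1 + (t ^ 2 / 2) • (T + Tᵀ - S * S)) * (1 + (t ^ 2 / 2) • (T + Tᵀ - S * S)) =
      t ^ 3 • (Tᵀ * S - S * T + t • (Tᵀ * T -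
        (1 / 4 : ℝ) • ((T + Tᵀ - S * S) * (T + Tᵀ - S * S)))) := by
  generalize hK : T + Tᵀ - S * S = K
  simp only [Matrix.transpose_add, Matrix.transpose_smul, Matrix.transpose_one, hS, mul_add,
    add_mul, smul_mul_assoc, mul_smul_comm, one_mul, mul_one, neg_mul]
  rw [← hK]
  module

theorem symM_iff_isHermitian {A : M3} : SymM A ↔ (Matrix.of A).IsHermitian := by
  rw [Matrix.IsHermitian.ext_iff]
  exact ⟨fun h i j => h j i, fun h i j => h j i⟩

theorem sum_sum_eq_dotProduct_mulVec (A : M3) (v : V3) :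
    ∑ i, ∑ j, v i * A i j * v j = star v ⬝ᵥ (Matrix.of A *ᵥ v) := by
  simp [dotProduct, Matrix.mulVec, Finset.mul_sum, mul_assoc]

theorem symM_and_posDefM_iff_posDef {A : M3} : SymM A ∧ PosDefM A ↔ (Matrix.of A).PosDef := by
  simp only [Matrix.posDef_iff_dotProduct_mulVec, symM_iff_isHermitian, PosDefM,
    sum_sum_eq_dotProduct_mulVec]

theorem fnorm_eq_norm (A : M3) : fnorm A = ‖Matrix.of A‖ := by
  rw [fnorm, ← Real.sqrt_sq (norm_nonneg _), Matrix.frobenius_norm_sq]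
  rfl

theorem of_idm : Matrix.of idm = 1 := by
  ext i j
  simp [idm, Matrix.one_apply]

theorem of_mmul (A B : M3) : Matrix.of (mmul A B) = Matrix.of A * Matrix.of B := rfl

theorem of_transp (A : M3) : Matrix.of (transp A) = (Matrix.of A)ᵀ := rfl

/-- The matrix form of the expansion of the square root. -/
theorem exists_norm_sub_le_of_transpose_eq_neg {n : Type*} [Fintype n] [DecidableEq n]
    {S : Matrix n n ℝ} (T : Matrix n n ℝ) (hS : Sᵀ = -S) :
    ∃ ε > (0 : ℝ), ∃ C > (0 : ℝ), ∀ t : ℝ, |t| < ε →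
      ((1 + t • S + t ^ 2 • T)ᵀ * (1 + t • S + t ^ 2 • T)).PosDef ∧
      ∀ B : Matrix n n ℝ, B.PosSemidef →
        B * B = (1 + t • S + t ^ 2 • T)ᵀ * (1 + t • S + t ^ 2 • T) →
        ‖B - (1 + (t ^ 2 / 2) • (T + Tᵀ - S * S))‖ ≤ C * |t| ^ 3 := by
  have hdet : ∀ᶠ t : ℝ in 𝓝 0, (1 + t • S + t ^ 2 • T).det ≠ 0 := by
    have hcont : Continuous fun t : ℝ => (1 + t • S + t ^ 2 • T).det :=
      Continuous.matrix_det (by fun_prop)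
    exact hcont.continuousAt.eventually_ne (by simp)
  have hsmall : ∀ᶠ t : ℝ in 𝓝 0, ‖(t ^ 2 / 2) • (T + Tᵀ - S * S)‖ < 1 / 2 := by
    have hcont : Continuous fun t : ℝ => ‖(t ^ 2 / 2) • (T + Tᵀ - S * S)‖ := by fun_prop
    exact hcont.continuousAt.eventually_lt continuousAt_const (by simp)
  have hone : ∀ᶠ t : ℝ in 𝓝 0, |t| < 1 :=
    continuous_abs.continuousAt.eventually_lt continuousAt_const (by simp)
  obtain ⟨ε, hε, h⟩ := Metric.eventually_nhds_iff.mp (hdet.and (hsmall.and hone))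
  set L := Tᵀ * S - S * T with hL
  set N := Tᵀ * T - (1 / 4 : ℝ) • ((T + Tᵀ - S * S) * (T + Tᵀ - S * S)) with hN
  refine ⟨ε, hε, 2 * (‖L‖ + ‖N‖) + 1, by positivity, fun t ht => ?_⟩
  obtain ⟨ht_det, ht_small, ht_one⟩ := h (y := t) (by simpa using ht)
  refine ⟨?_, fun B hB hBB => ?_⟩
  · have hunit : IsUnit (1 + t • S + t ^ 2 • T) :=
      (Matrix.isUnit_iff_isUnit_det _).mpr (isUnit_iff_ne_zero.mpr ht_det)
    simpa using Matrix.PosDef.conjTranspose_mul_self _ (Matrix.mulVec_injective_of_isUnit hunit)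
  · have hbound := hB.norm_sub_le_two_mul_norm_mul_self_sub ht_small.le
    rw [hBB, mul_self_sub_mul_self_of_transpose_eq_neg hS, ← hL, ← hN, norm_smul, norm_pow,
      Real.norm_eq_abs] at hbound
    have hrem : ‖L + t • N‖ ≤ ‖L‖ + ‖N‖ := by
      refine (norm_add_le _ _).trans (add_le_add le_rfl ?_)
      rw [norm_smul, Real.norm_eq_abs]
      exact mul_le_of_le_one_left (norm_nonneg N) ht_one.le
    have hcube : 0 ≤ |t| ^ 3 := by positivity
    nlinarith [mul_le_mul_of_nonneg_left hrem hcube]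

/-- For `S` skew and `K = T + Tᵀ - S²`, the square root of
`(Id + tS + t²T)ᵀ(Id + tS + t²T)` equals `Id + (t²/2) K + O(|t|³)`. -/
theorem stmt2 (S T : M3) (hS : ∀ i j, S i j = - S j i) :
    ∃ ε > (0 : ℝ), ∃ C > (0 : ℝ), ∀ t : ℝ, |t| < ε →
      ∀ Mt : M3, Mt = mmul (transp (idm + t • S + t ^ 2 • T)) (idm + t • S + t ^ 2 • T) →
        SymM Mt ∧ PosDefM Mt ∧
        (∃ B : M3, SymM B ∧ PosDefM B ∧ mmul B B = Mt ∧
          fnorm (B - idm - (t ^ 2 / 2) • (T + transp T - mmul S S)) ≤ C * |t| ^ 3) ∧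
        (∀ B B' : M3, SymM B → PosDefM B → mmul B B = Mt →
          SymM B' → PosDefM B' → mmul B' B' = Mt → B = B') := by
  obtain ⟨ε, hε, C, hC, h⟩ := exists_norm_sub_le_of_transpose_eq_neg (S := Matrix.of S)
    (Matrix.of T) (by ext i j; exact hS j i)
  refine ⟨ε, hε, C, hC, fun t ht Mt hMt => ?_⟩
  obtain ⟨hpos, hbound⟩ := h t ht
  have hM : Matrix.of Mt = (1 + t • Matrix.of S + t ^ 2 • Matrix.of T)ᵀ *
      (1 + t • Matrix.of S + t ^ 2 • Matrix.of T) := by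
    rw [hMt, of_mmul, of_transp, ← of_idm]
    rfl
  rw [← hM] at hpos hbound
  obtain ⟨hsym, hposM⟩ := symM_and_posDefM_iff_posDef.mpr hpos
  refine ⟨hsym, hposM, ?_, fun B B' hB hBpos hBB hB' hBpos' hBB' => ?_⟩
  · obtain ⟨B, hB, hBB⟩ := hpos.exists_posDef_mul_self_eq
    obtain ⟨hBsym, hBpos⟩ := symM_and_posDefM_iff_posDef (A := B).mpr hB
    refine ⟨B, hBsym, hBpos, hBB, ?_⟩
    rw [fnorm_eq_norm]
    convert hbound B hB.posSemidef hBB using 2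
    rw [← sub_sub, ← of_idm]
    rfl
  · exact (symM_and_posDefM_iff_posDef.mp ⟨hB, hBpos⟩).posSemidef.eq_of_mul_self_eq_mul_self
      (symM_and_posDefM_iff_posDef.mp ⟨hB', hBpos'⟩).posSemidef (hBB.trans hBB'.symm)
end
end

section
/- Let S ∈ ℝ^{3×3} be skew-symmetric, let T ∈ ℝ^{3×3} be arbitrary, and let R0 ∈ SO(3). Then there exist ε > 0 and C > 0 such that for every real t with |t| < ε there are a symmetric matrix M(t) ∈ ℝ^{3×3} with ‖M(t)‖ ≤ C and a rotation R(t) ∈ SO(3) such that (Id₃ + tS + t²T) R0 = (Id₃ + t² M(t)) R(t). -/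
noncomputable section

open scoped Topology ENNReal
open Filter MeasureTheory

open scoped Matrix

/-- A positive semidefinite real matrix has a positive semidefinite square root. -/
lemma Matrix.PosSemidef.exists_posSemidef_mul_self_eq {n : Type*} [Fintype n] [DecidableEq n]
    {A : Matrix n n ℝ} (hA : A.PosSemidef) : ∃ P : Matrix n n ℝ, P.PosSemidef ∧ P * P = A := by
  open scoped MatrixOrder Matrix.Norms.L2Operator in
  exact ⟨CFC.sqrt A, Matrix.nonneg_iff_posSemidef.mp (CFC.sqrt_nonneg A),
    CFC.sqrt_mul_sqrt_self A (Matrix.nonneg_iff_posSemidef.mpr hA)⟩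

/-- Multiplying by `1 + P` with `P` positive semidefinite does not decrease the
Frobenius norm. -/
lemma Matrix.PosSemidef.trace_transpose_mul_self_le {n : Type*} [Fintype n] [DecidableEq n]
    {P : Matrix n n ℝ} (hP : P.PosSemidef) (M : Matrix n n ℝ) :
    (Mᵀ * M).trace ≤ (((1 + P) * M)ᵀ * ((1 + P) * M)).trace := by
  have hPt : Pᵀ = P := by simpa using hP.isHermitian.eq
  have h₁ : 0 ≤ (Mᵀ * P * M).trace := by
    simpa using (hP.conjTranspose_mul_mul_same M).trace_nonneg
  have h₂ : 0 ≤ ((P * M)ᵀ * (P * M)).trace := by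
    simpa using (Matrix.posSemidef_conjTranspose_mul_self (P * M)).trace_nonneg
  have h₃ : ((1 + P) * M)ᵀ * ((1 + P) * M)
      = Mᵀ * M + Mᵀ * P * M + Mᵀ * P * M + (P * M)ᵀ * (P * M) := by
    simp only [Matrix.transpose_mul, Matrix.transpose_add, Matrix.transpose_one, hPt]
    noncomm_ring
  rw [h₃]
  simp only [Matrix.trace_add]
  linarith

lemma fnorm_eq_sqrt_trace (A : Matrix (Fin 3) (Fin 3) ℝ) :
    fnorm A = Real.sqrt (Aᵀ * A).trace := by
  change Real.sqrt (∑ i, ∑ j, A i j ^ 2) = _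
  rw [Finset.sum_comm]
  simp [Matrix.trace, Matrix.mul_apply, sq]

lemma idm_eq_one : (idm : M3) = (1 : Matrix (Fin 3) (Fin 3) ℝ) := by
  ext i j
  simp [idm, Matrix.one_apply]

lemma mem_SO3_iff (R : Matrix (Fin 3) (Fin 3) ℝ) :
    (R : M3) ∈ SO3 ↔ Rᵀ * R = 1 ∧ R.det = 1 := by
  change (mmul (transp R) R = idm ∧ R.det = 1) ↔ _
  rw [idm_eq_one]
  rfl

/-- The second-order remainder of `F Fᵀ`, where `F = 1 + t S + t² T` and `S` is skew. -/
def gramRemainder (S T : Matrix (Fin 3) (Fin 3) ℝ) (t : ℝ) : Matrix (Fin 3) (Fin 3) ℝ :=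
  T + Tᵀ - S * S + t • (S * Tᵀ - T * S) + t ^ 2 • (T * Tᵀ)

lemma mul_transpose_eq_one_add_gramRemainder {S : Matrix (Fin 3) (Fin 3) ℝ} (hS : Sᵀ = -S)
    (T : Matrix (Fin 3) (Fin 3) ℝ) (t : ℝ) :
    (1 + t • S + t ^ 2 • T) * (1 + t • S + t ^ 2 • T)ᵀ = 1 + t ^ 2 • gramRemainder S T t := by
  simp only [gramRemainder, Matrix.transpose_add, Matrix.transpose_smul, Matrix.transpose_one, hS,
    add_mul, mul_add, smul_mul_assoc, mul_smul_comm, one_mul, mul_one, mul_neg, smul_add,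
    smul_sub, smul_neg, smul_smul]
  module

/-- Left polar decomposition of a matrix with positive determinant whose Gram matrix is
`1 + t² K`; the symmetric factor is `1 + t² M` with `M` no larger than `K`. -/
lemma exists_polar_of_mul_transpose_eq {F K : Matrix (Fin 3) (Fin 3) ℝ} {t : ℝ} (ht : t ≠ 0)
    (hF : 0 < F.det) (hFK : F * Fᵀ = 1 + t ^ 2 • K) :
    ∃ M Q : Matrix (Fin 3) (Fin 3) ℝ, Mᵀ = M ∧ fnorm M ≤ fnorm K ∧
      Qᵀ * Q = 1 ∧ Q.det = 1 ∧ F = (1 + t ^ 2 • M) * Q := by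
  have ht2 : t ^ 2 ≠ 0 := pow_ne_zero 2 ht
  obtain ⟨P, hP, hPP⟩ := Matrix.PosSemidef.exists_posSemidef_mul_self_eq
    (A := F * Fᵀ) (by simpa using Matrix.posSemidef_self_mul_conjTranspose F)
  have hPt : Pᵀ = P := by simpa using hP.isHermitian.eq
  have hdet : P.det = F.det := by
    have h : P.det * P.det = F.det * F.det := by
      simpa [Matrix.det_mul] using congrArg Matrix.det hPP
    nlinarith [hP.det_nonneg]
  have hunit : IsUnit P.det := by rw [hdet]; exact hF.ne'.isUnit
  have hM : 1 + t ^ 2 • ((t ^ 2)⁻¹ • (P - 1)) = P := by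
    rw [smul_smul, mul_inv_cancel₀ ht2, one_smul, add_sub_cancel]
  have hK : (1 + P) * ((t ^ 2)⁻¹ • (P - 1)) = K := by
    have h : (1 + P) * (P - 1) = t ^ 2 • K := by
      rw [show (1 + P) * (P - 1) = P * P - 1 by noncomm_ring, hPP, hFK, add_sub_cancel_left]
    rw [mul_smul_comm, h, smul_smul, inv_mul_cancel₀ ht2, one_smul]
  refine ⟨(t ^ 2)⁻¹ • (P - 1), P⁻¹ * F, ?_, ?_, ?_, ?_, ?_⟩
  · simp [hPt]
  · rw [fnorm_eq_sqrt_trace, fnorm_eq_sqrt_trace]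
    apply Real.sqrt_le_sqrt
    have h := hP.trace_transpose_mul_self_le ((t ^ 2)⁻¹ • (P - 1))
    rwa [hK] at h
  · apply mul_eq_one_comm.mp
    rw [Matrix.transpose_mul, Matrix.transpose_nonsing_inv, hPt,
      show P⁻¹ * F * (Fᵀ * P⁻¹) = P⁻¹ * (F * Fᵀ) * P⁻¹ by noncomm_ring, ← hPP,
      Matrix.nonsing_inv_mul_cancel_left _ _ hunit, Matrix.mul_nonsing_inv _ hunit]
  · rw [Matrix.det_mul, Matrix.det_nonsing_inv, Ring.inverse_eq_inv', hdet,
      inv_mul_cancel₀ hF.ne']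
  · rw [hM, Matrix.mul_nonsing_inv_cancel_left _ _ hunit]

/-- For `S` skew, `T` arbitrary and `R₀ ∈ SO(3)`, for small `t` one can write
`(Id + tS + t²T) R₀ = (Id + t² M(t)) R(t)` with `M(t)` symmetric and bounded and `R(t) ∈ SO(3)`. -/
theorem stmt4 (S T : M3) (hS : ∀ i j, S i j = - S j i) (R0 : M3) (hR0 : R0 ∈ SO3) :
    ∃ ε > (0 : ℝ), ∃ C > (0 : ℝ), ∀ t : ℝ, |t| < ε →
      ∃ M R : M3, SymM M ∧ fnorm M ≤ C ∧ R ∈ SO3 ∧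
        mmul (idm + t • S + t ^ 2 • T) R0 = mmul (idm + t ^ 2 • M) R := by
  let Smat : Matrix (Fin 3) (Fin 3) ℝ := S
  let Tmat : Matrix (Fin 3) (Fin 3) ℝ := T
  let Rmat : Matrix (Fin 3) (Fin 3) ℝ := R0
  have hSmat : Smatᵀ = -Smat := by
    ext i j
    exact hS j i
  have hRmat := (mem_SO3_iff Rmat).mp hR0
  have hdet : ∀ᶠ t : ℝ in 𝓝 0, 0 < (1 + t • Smat + t ^ 2 • Tmat).det := by
    have hc : Continuous fun t : ℝ => (1 + t • Smat + t ^ 2 • Tmat).det := by fun_prop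
    exact hc.continuousAt.eventually_const_lt (by simp)
  have hbound : ∀ᶠ t : ℝ in 𝓝 0,
      fnorm (gramRemainder Smat Tmat t) < fnorm (gramRemainder Smat Tmat 0) + 1 := by
    have hc : Continuous fun t : ℝ => fnorm (gramRemainder Smat Tmat t) := by
      simp only [fnorm_eq_sqrt_trace, gramRemainder]
      fun_prop
    exact hc.continuousAt.eventually_lt_const (lt_add_one _)
  obtain ⟨ε, hε, h⟩ := Metric.eventually_nhds_iff.mp (hdet.and hbound)
  have hC : 0 < fnorm (gramRemainder Smat Tmat 0) + 1 :=
    add_pos_of_nonneg_of_pos (Real.sqrt_nonneg _) one_pos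
  refine ⟨ε, hε, _, hC, fun t ht => ?_⟩
  obtain ⟨hpos, hlt⟩ := h (by simpa using ht)
  rcases eq_or_ne t 0 with rfl | ht0
  · refine ⟨0, R0, fun _ _ => rfl, ?_, hR0, by simp⟩
    simpa [fnorm] using hC.le
  obtain ⟨M, Q, hM, hMK, hQ, hQdet, hF⟩ := exists_polar_of_mul_transpose_eq ht0 hpos
    (mul_transpose_eq_one_add_gramRemainder hSmat Tmat t)
  refine ⟨M, Q * Rmat, fun i j => congrFun (congrFun hM j) i, hMK.trans hlt.le,
    (mem_SO3_iff _).mpr ⟨?_, by rw [Matrix.det_mul, hQdet, hRmat.2, one_mul]⟩, ?_⟩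
  · rw [Matrix.transpose_mul, show Rmatᵀ * Qᵀ * (Q * Rmat) = Rmatᵀ * (Qᵀ * Q) * Rmat by noncomm_ring,
      hQ, mul_one, hRmat.1]
  · rw [idm_eq_one]
    change (1 + t • Smat + t ^ 2 • Tmat) * Rmat = (1 + t ^ 2 • M) * (Q * Rmat)
    rw [hF, mul_assoc]
end
end

section
/- Suppose that R_{1212} ≡ R_{1213} ≡ R_{1223} ≡ 0 on Ω and that sym((∇y0)ᵀ ∇d0) + (∇b0)ᵀ ∇b0 ≡ 0 on Ω. Then also R_{1313} ≡ R_{1323} ≡ R_{2323} ≡ 0 on Ω; that is, all six independent components R_{1212}, R_{1213}, R_{1223}, R_{1313}, R_{1323}, R_{2323} of the Riemann curvature tensor of G vanish identically, so G is a flat metric. -/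
noncomputable section

open scoped Topology ENNReal
open Filter MeasureTheory

/-- Mixed directional derivatives of a `C²` map commute. -/
theorem fderiv_fderiv_apply_comm {E F : Type*} [NormedAddCommGroup E] [NormedSpace ℝ E]
    [NormedAddCommGroup F] [NormedSpace ℝ F] {f : E → F} {x : E} (hf : ContDiffAt ℝ 2 f x)
    (v w : E) :
    fderiv ℝ (fun y => fderiv ℝ f y v) x w = fderiv ℝ (fun y => fderiv ℝ f y w) x v := by
  have hd : DifferentiableAt ℝ (fderiv ℝ f) x :=
    (hf.fderiv_right (m := 1) (by norm_num)).differentiableAt (by norm_num)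
  have hs : IsSymmSndFDerivAt ℝ f x := hf.isSymmSndFDerivAt (by simp)
  have key (u : E) : fderiv ℝ (fun y => fderiv ℝ f y u) x = (fderiv ℝ (fderiv ℝ f) x).flip u := by
    rw [fderiv_clm_apply hd (differentiableAt_const u)]
    simp
  rw [key, key]
  exact hs w v

theorem pd2_comm {f : E2 → ℝ} {x : E2} (hf : ContDiffAt ℝ 2 f x) (i j : Fin 2) :
    pd2 i (pd2 j f) x = pd2 j (pd2 i f) x :=
  fderiv_fderiv_apply_comm hf _ _

theorem pdv_comm {f : E2 → V3} {x : E2} (hf : ContDiffAt ℝ 2 f x) (i j : Fin 2) :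
    pdv i (pdv j f) x = pdv j (pdv i f) x :=
  fderiv_fderiv_apply_comm hf _ _

theorem pd2_congr {f g : E2 → ℝ} {x : E2} (h : f =ᶠ[𝓝 x] g) (i : Fin 2) :
    pd2 i f x = pd2 i g x := by
  rw [pd2, pd2, h.fderiv_eq]

theorem pd2_const_mul (c : ℝ) (f : E2 → ℝ) (x : E2) (i : Fin 2) :
    pd2 i (fun y => c * f y) x = c * pd2 i f x := by
  change fderiv ℝ (c • f) x _ = _
  rw [fderiv_const_smul_field]
  rfl

theorem differentiableAt_pdv {f : E2 → V3} {x : E2} (hf : ContDiffAt ℝ 2 f x) (i : Fin 2) :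
    DifferentiableAt ℝ (pdv i f) x :=
  ((hf.fderiv_right (m := 1) (by norm_num)).differentiableAt (by norm_num)).clm_apply
    (differentiableAt_const _)

theorem dot3_comm (u v : V3) : dot3 u v = dot3 v u := by
  simp only [dot3, mul_comm]

/-- The Leibniz rule for the inner product on `ℝ³`. -/
theorem pd2_dot3 {f g : E2 → V3} {x : E2} (hf : DifferentiableAt ℝ f x)
    (hg : DifferentiableAt ℝ g x) (i : Fin 2) :
    pd2 i (fun y => dot3 (f y) (g y)) x = dot3 (pdv i f x) (g x) + dot3 (f x) (pdv i g x) := by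
  have hfk (k : Fin 3) : HasFDerivAt (fun y => f y k)
      ((ContinuousLinearMap.proj k).comp (fderiv ℝ f x)) x :=
    hasFDerivAt_pi'.1 hf.hasFDerivAt k
  have hgk (k : Fin 3) : HasFDerivAt (fun y => g y k)
      ((ContinuousLinearMap.proj k).comp (fderiv ℝ g x)) x :=
    hasFDerivAt_pi'.1 hg.hasFDerivAt k
  have h := HasFDerivAt.fun_sum (u := Finset.univ) fun k _ => (hfk k).mul (hgk k)
  have h' : fderiv ℝ (fun y => dot3 (f y) (g y)) x = _ := h.fderiv
  rw [pd2, h']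
  simp only [dot3, pdv, ← Finset.sum_add_distrib, FunLike.coe_sum, Finset.sum_apply]
  refine Finset.sum_congr rfl fun k _ => ?_
  simp
  ring

theorem pd3_castSucc (i : Fin 2) (f : E2 → ℝ) : pd3 i.castSucc f = pd2 i f := by
  funext x
  exact dif_pos i.isLt

theorem pd3_two (f : E2 → ℝ) : pd3 2 f = fun _ => 0 := by
  funext x
  simp [pd3]

theorem pd2_zero (i : Fin 2) (x : E2) : pd2 i (fun _ => 0) x = 0 := by
  simp [pd2]

theorem Qcol_castSucc (y0 b0 : E2 → V3) (i : Fin 2) :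
    (fun x => Qcol y0 b0 x i.castSucc) = pdv i y0 := by
  funext x
  fin_cases i <;> rfl

/-- If `G = QᵀQ` with `Q` invertible, the vectors `G⁻¹ Qᵀ D` and `G⁻¹ Qᵀ D'` have `G`-inner
product equal to the Euclidean inner product of `D` and `D'`. -/
theorem sum_mul_minv_dot3 {g : M3} {q : Fin 3 → V3} (hg : ∀ i j, dot3 (q i) (q j) = g i j)
    (hq : (Matrix.of fun a j => q j a).det ≠ 0) (D D' : V3) :
    ∑ n, ∑ p, g n p * ((∑ s, minv g n s * dot3 (q s) D) * ∑ s, minv g p s * dot3 (q s) D') =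
      dot3 D D' := by
  set Q : Matrix (Fin 3) (Fin 3) ℝ := Matrix.of fun a j => q j a with hQ
  have hu : IsUnit Q.det := isUnit_iff_ne_zero.2 hq
  have hG : Matrix.of g = Q.transpose * Q := by
    ext i j
    simp [← hg, dot3, Matrix.mul_apply, hQ]
  have hinv (D : V3) : (fun n => ∑ s, minv g n s * dot3 (q s) D) = Q⁻¹.mulVec D := by
    have h1 : (fun n => ∑ s, minv g n s * dot3 (q s) D) =
        ((Matrix.of g)⁻¹).mulVec (Q.transpose.mulVec D) := rfl
    rw [h1, hG, Matrix.mul_inv_rev, Matrix.mulVec_mulVec, Matrix.mul_assoc,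
      Matrix.nonsing_inv_mul _ (by rwa [Matrix.det_transpose]), Matrix.mul_one]
  have hQD (D : V3) : Q.mulVec (Q⁻¹.mulVec D) = D := by
    rw [Matrix.mulVec_mulVec, Matrix.mul_nonsing_inv _ hu, Matrix.one_mulVec]
  have hn (D : V3) (n : Fin 3) := congrFun (hinv D) n
  simp only [hn]
  have hform (u v : V3) : ∑ n, ∑ p, g n p * (u n * v p) = dot3 (Q.mulVec u) (Q.mulVec v) := by
    simp only [← hg, dot3, Matrix.mulVec, dotProduct, hQ, Matrix.of_apply, Fin.sum_univ_three]
    ring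
  rw [hform, hQD, hQD]

theorem Gamma_eq_of_forall {G : E2 → M3} {x : E2} {k l : Fin 3} {q : Fin 3 → V3} {D : V3}
    (h : ∀ s, pd3 k (fun y => G y s l) x + pd3 l (fun y => G y s k) x
      - pd3 s (fun y => G y k l) x = 2 * dot3 (q s) D) (n : Fin 3) :
    Gamma G n k l x = ∑ s, minv (G x) n s * dot3 (q s) D := by
  simp only [Gamma, h, Finset.mul_sum]
  exact Finset.sum_congr rfl fun s _ => by ring

/-- The curvatures `R_{i3j3}` vanish as soon as the second-order expansion
`y₀ + x₃ b₀ + x₃² d₀ / 2` matches the metric in the in-plane directions. -/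
theorem Riem_castSucc_two_castSucc_two_eq_zero {Ω : Set E2} (hΩo : IsOpen Ω) {G : E2 → M3}
    {y0 b0 d0 : E2 → V3} (hy : ContDiffOn ℝ 2 y0 Ω) (hb : ContDiffOn ℝ 2 b0 Ω)
    (hd : ContDiffOn ℝ 2 d0 Ω)
    (hQ0 : ∀ x ∈ Ω, ∀ i j : Fin 3, dot3 (Qcol y0 b0 x i) (Qcol y0 b0 x j) = G x i j)
    (hQdet : ∀ x ∈ Ω, Qdet y0 b0 x ≠ 0)
    (hsym0 : ∀ x ∈ Ω, ∀ i j : Fin 2,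
      dot3 (pdv i y0 x) (pdv j b0 x) + dot3 (pdv j y0 x) (pdv i b0 x) = 0)
    (hyd : ∀ x ∈ Ω, ∀ i : Fin 2, dot3 (pdv i y0 x) (d0 x) = - dot3 (pdv i b0 x) (b0 x))
    (hbd : ∀ x ∈ Ω, dot3 (b0 x) (d0 x) = 0)
    (hnowe : ∀ x ∈ Ω, ∀ i j : Fin 2,
      (dot3 (pdv i y0 x) (pdv j d0 x) + dot3 (pdv j y0 x) (pdv i d0 x)) / 2 +
        dot3 (pdv i b0 x) (pdv j b0 x) = 0)
    {x : E2} (hx : x ∈ Ω) (i j : Fin 2) :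
    Riem G i.castSucc 2 j.castSucc 2 x = 0 := by
  have hbG : ∀ᶠ z in 𝓝 x, z ∈ Ω := hΩo.mem_nhds hx
  have cy {z} (hz : z ∈ Ω) : ContDiffAt ℝ 2 y0 z := hy.contDiffAt (hΩo.mem_nhds hz)
  have cb {z} (hz : z ∈ Ω) : ContDiffAt ℝ 2 b0 z := hb.contDiffAt (hΩo.mem_nhds hz)
  have cd {z} (hz : z ∈ Ω) : ContDiffAt ℝ 2 d0 z := hd.contDiffAt (hΩo.mem_nhds hz)
  have db {z} (hz : z ∈ Ω) : DifferentiableAt ℝ b0 z := (cb hz).differentiableAt (by norm_num)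
  have dd : DifferentiableAt ℝ d0 x := (cd hx).differentiableAt (by norm_num)
  have dy {z} (hz : z ∈ Ω) (a : Fin 2) : DifferentiableAt ℝ (pdv a y0) z :=
    differentiableAt_pdv (cy hz) a
  have G33 {z} (hz : z ∈ Ω) (k : Fin 2) :
      pd2 k (fun y => G y 2 2) z = -2 * dot3 (pdv k y0 z) (d0 z) := by
    rw [pd2_congr (g := fun y => dot3 (b0 y) (b0 y)) ?_, pd2_dot3 (db hz) (db hz), hyd z hz,
      dot3_comm (b0 z)]
    · ring
    · filter_upwards [hΩo.mem_nhds hz] with w hw using (hQ0 w hw 2 2).symm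
  have Gab (k a c : Fin 2) : pd2 k (fun y => G y a.castSucc c.castSucc) x =
      dot3 (pdv k (pdv a y0) x) (pdv c y0 x) + dot3 (pdv a y0 x) (pdv k (pdv c y0) x) := by
    rw [← pd2_dot3 (dy hx a) (dy hx c)]
    refine pd2_congr ?_ k
    filter_upwards [hbG] with w hw
    rw [← hQ0 w hw, ← Qcol_castSucc y0 b0, ← Qcol_castSucc y0 b0]
  have Ga3 (k a : Fin 2) : pd2 k (fun y => G y a.castSucc 2) x =
      dot3 (pdv k (pdv a y0) x) (b0 x) + dot3 (pdv a y0 x) (pdv k b0 x) := by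
    rw [← pd2_dot3 (dy hx a) (db hx)]
    refine pd2_congr ?_ k
    filter_upwards [hbG] with w hw
    rw [← hQ0 w hw, ← Qcol_castSucc y0 b0]
    rfl
  have G3a (k a : Fin 2) : pd2 k (fun y => G y 2 a.castSucc) x =
      dot3 (pdv k (pdv a y0) x) (b0 x) + dot3 (pdv a y0 x) (pdv k b0 x) := by
    rw [← Ga3]
    refine pd2_congr ?_ k
    filter_upwards [hbG] with w hw
    rw [← hQ0 w hw, ← hQ0 w hw, dot3_comm]
  have Qa (a : Fin 2) : Qcol y0 b0 x a.castSucc = pdv a y0 x :=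
    congrFun (Qcol_castSucc y0 b0 a) x
  have Q3 : Qcol y0 b0 x 2 = b0 x := rfl
  have cases3 {P : Fin 3 → Prop} (h2 : P 2) (h : ∀ a : Fin 2, P a.castSucc) (s : Fin 3) : P s :=
    Fin.lastCases h2 h s
  have Γ33 := Gamma_eq_of_forall (G := G) (x := x) (k := 2) (l := 2) (q := Qcol y0 b0 x)
    (D := d0 x) <| cases3 (by simp [pd3_two, Q3, hbd x hx])
      fun a => by simp only [pd3_two, pd3_castSucc, Qa, G33 hx]; ring
  have Γ3a (a : Fin 2) := Gamma_eq_of_forall (G := G) (x := x) (k := 2) (l := a.castSucc)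
    (q := Qcol y0 b0 x) (D := pdv a b0 x) <| cases3
      (by
        simp only [pd3_two, pd3_castSucc, Q3, G33 hx, hyd x hx, dot3_comm (b0 x)]
        ring)
      fun c => by
        simp only [pd3_two, pd3_castSucc, Qa, Ga3, G3a, pdv_comm (cy hx) c a]
        linarith [hsym0 x hx a c]
  have Γa3 (a : Fin 2) := Gamma_eq_of_forall (G := G) (x := x) (k := a.castSucc) (l := 2)
    (q := Qcol y0 b0 x) (D := pdv a b0 x) <| cases3
      (by
        simp only [pd3_two, pd3_castSucc, Q3, G33 hx, hyd x hx, dot3_comm (b0 x)]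
        ring)
      fun c => by
        simp only [pd3_two, pd3_castSucc, Qa, Ga3, pdv_comm (cy hx) c a]
        linarith [hsym0 x hx a c]
  have Γab (a c : Fin 2) := Gamma_eq_of_forall (G := G) (x := x) (k := a.castSucc)
    (l := c.castSucc) (q := Qcol y0 b0 x) (D := pdv a (pdv c y0) x) <| cases3
      (by
        simp only [pd3_two, pd3_castSucc, Q3, G3a, pdv_comm (cy hx) c a, dot3_comm (b0 x)]
        linarith [hsym0 x hx a c])
      fun e => by
        simp only [pd3_castSucc, Qa, Gab, pdv_comm (cy hx) c a, pdv_comm (cy hx) e a,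
          pdv_comm (cy hx) e c, dot3_comm (pdv e y0 x), dot3_comm (pdv a y0 x)]
        ring
  have ddG (k l : Fin 2) : pd2 k (pd2 l fun y => G y 2 2) x =
      -2 * (dot3 (pdv k (pdv l y0) x) (d0 x) + dot3 (pdv l y0 x) (pdv k d0 x)) := by
    rw [← pd2_dot3 (dy hx l) dd, ← pd2_const_mul]
    refine pd2_congr ?_ k
    filter_upwards [hbG] with w hw using G33 hw l
  have cG : ContDiffAt ℝ 2 (fun y => G y 2 2) x := by
    have : ContDiffAt ℝ 2 (fun y => dot3 (b0 y) (b0 y)) x := by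
      have hk (k : Fin 3) : ContDiffAt ℝ 2 (fun y => b0 y k) x := contDiffAt_pi.1 (cb hx) k
      exact ContDiffAt.sum fun k _ => (hk k).mul (hk k)
    refine this.congr_of_eventuallyEq ?_
    filter_upwards [hbG] with w hw using (hQ0 w hw 2 2).symm
  have hij := ddG i j
  have hji := ddG j i
  rw [pd2_comm cG, pdv_comm (cy hx)] at hji
  have hdet : (Matrix.of fun a j => Qcol y0 b0 x j a).det ≠ 0 := hQdet x hx
  simp only [Riem, pd3_two, pd3_castSucc, Γ33, Γ3a, Γa3, Γab, mul_sub, Finset.sum_sub_distrib,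
    sum_mul_minv_dot3 (hQ0 x hx) hdet, pd2_zero]
  have hn := hnowe x hx i j
  rw [dot3_comm (d0 x), dot3_comm (pdv j b0 x)]
  linarith

/-- If `R₁₂₁₂ ≡ R₁₂₁₃ ≡ R₁₂₂₃ ≡ 0` and
`sym((∇y₀)ᵀ∇d₀) + (∇b₀)ᵀ∇b₀ ≡ 0` on `Ω`, then all six independent Riemann curvatures of `G`
vanish identically on `Ω`, i.e. `G` is flat. -/
theorem stmt6
    (Ω : Set E2) (hΩo : IsOpen Ω) (hΩb : Bornology.IsBounded Ω)
    (hΩsc : SimplyConnectedSpace ↥Ω)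
    (G : E2 → M3) (hGsm : ContDiffOn ℝ (⊤ : ℕ∞) G (closure Ω))
    (hGsym : ∀ x ∈ closure Ω, SymM (G x)) (hGpos : ∀ x ∈ closure Ω, PosDefM (G x))
    (y0 : E2 → V3) (hy0sm : ContDiffOn ℝ (⊤ : ℕ∞) y0 (closure Ω))
    (himm : ∀ x ∈ Ω, ∀ i j : Fin 2,
      dot3 (pdv i y0 x) (pdv j y0 x) = G x i.castSucc j.castSucc)
    (b0 : E2 → V3) (hb0sm : ContDiffOn ℝ (⊤ : ℕ∞) b0 (closure Ω))
    (hQ0 : ∀ x ∈ Ω, ∀ i j : Fin 3,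
      dot3 (Qcol y0 b0 x i) (Qcol y0 b0 x j) = G x i j)
    (hQdet : ∀ x ∈ Ω, 0 < Qdet y0 b0 x)
    (hsym0 : ∀ x ∈ Ω, ∀ i j : Fin 2,
      dot3 (pdv i y0 x) (pdv j b0 x) + dot3 (pdv j y0 x) (pdv i b0 x) = 0)
    (d0 : E2 → V3) (hd0sm : ContDiffOn ℝ (⊤ : ℕ∞) d0 (closure Ω))
    (hd0 : ∀ x ∈ Ω,
      (∀ i : Fin 2, dot3 (Qcol y0 b0 x i.castSucc) (d0 x) = - dot3 (pdv i b0 x) (b0 x)) ∧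
      dot3 (Qcol y0 b0 x 2) (d0 x) = 0)
    (hvanish : ∀ x ∈ Ω,
      Riem G 0 1 0 1 x = 0 ∧ Riem G 0 1 0 2 x = 0 ∧ Riem G 0 1 1 2 x = 0)
    (hnowe : ∀ x ∈ Ω, ∀ i j : Fin 2,
      (dot3 (pdv i y0 x) (pdv j d0 x) + dot3 (pdv j y0 x) (pdv i d0 x)) / 2 +
        dot3 (pdv i b0 x) (pdv j b0 x) = 0) :
    ∀ x ∈ Ω,
      Riem G 0 1 0 1 x = 0 ∧ Riem G 0 1 0 2 x = 0 ∧ Riem G 0 1 1 2 x = 0 ∧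
      Riem G 0 2 0 2 x = 0 ∧ Riem G 0 2 1 2 x = 0 ∧ Riem G 1 2 1 2 x = 0 := by
  have hΩc : Ω ⊆ closure Ω := subset_closure
  have h2 : (2 : WithTop ℕ∞) ≤ ((⊤ : ℕ∞) : WithTop ℕ∞) := WithTop.coe_le_coe.2 le_top
  intro x hx
  have key := Riem_castSucc_two_castSucc_two_eq_zero hΩo ((hy0sm.of_le h2).mono hΩc)
    ((hb0sm.of_le h2).mono hΩc) ((hd0sm.of_le h2).mono hΩc) hQ0 (fun z hz => (hQdet z hz).ne')
    hsym0 (fun z hz i => congrFun (Qcol_castSucc y0 b0 i) z ▸ (hd0 z hz).1 i)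
    (fun z hz => (hd0 z hz).2) hnowe hx
  obtain ⟨h1, h2, h3⟩ := hvanish x hx
  exact ⟨h1, h2, h3, key 0 0, key 0 1, key 1 1⟩
end
end
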